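/- Let Ω ⊂ ℝⁿ be open, T > 0. Let F(x,t,r,p,X) be degenerate elliptic, defined for a.e. t ∈ (0,T) and all (x,r,p,X) ∈ Ω × ℝ × ℝⁿ × S(n), continuous in (x,r,p,X) for a.e. t, with t ↦ F(x,t,r,p,X) ∈ L¹(0,T), and satisfying property (M). Let H : ℝⁿ → ℝ be locally Lipschitz continuous. Let (w_ε)_ε be C¹ functions on [0,T] with ‖ẇ_ε‖_{L¹(0,T)} uniformly bounded in ε, converging uniformly on [0,T] to an absolutely continuous function w with ẇ ∈ L¹(0,T). If (u^ε)_ε is a sequence of locally uniformly bounded L¹-viscosity subsolutions of u^ε_t + F(x,t,u^ε,Du^ε,D²u^ε) + ẇ_ε(t) H(Du^ε) = 0 in Ω × (0,T), then ū := limsup* u^ε is an L¹-viscosity subsolution of u_t + F(x,t,u,Du,D²u) + ẇ(t) H(Du) = 0 in Ω × (0,T). -/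

import Mathlib

open Filter MeasureTheory Topology

attribute [local instance] Matrix.normedAddCommGroup

/-- The Euclidean space ℝⁿ. -/
abbrev Euc (n : ℕ) := EuclideanSpace ℝ (Fin n)

/-- The space S(n) of n×n real symmetric matrices. -/
abbrev SymMat (n : ℕ) := {X : Matrix (Fin n) (Fin n) ℝ // X.IsSymm}

/-- The matrix order X ≤ Y on symmetric matrices: Y - X is positive semidefinite. -/
def symLE {n : ℕ} (X Y : SymMat n) : Prop := (Y.1 - X.1).PosSemidef

/-- A modulus `m : (0,T) × ℝ⁺ → ℝ⁺` with `m(·,r) ∈ L¹(0,T)`, `m(t,·)` nondecreasing and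
`m(·,r) → 0` in `L¹(0,T)` as `r → 0⁺`. -/
structure IsModulus (T : ℝ) (m : ℝ → ℝ → ℝ) : Prop where
  nonneg : ∀ t r, 0 ≤ m t r
  integrable : ∀ r, 0 ≤ r → IntegrableOn (fun t => m t r) (Set.Ioo 0 T)
  mono : ∀ t, Monotone (m t)
  l1_tendsto : Tendsto (fun r => ∫ t in Set.Ioo 0 T, m t r) (𝓝[>] 0) (𝓝 0)

/-- `H` satisfies the estimate of property M(K) on the set `K` with modulus `m`. -/
def SatisfiesMOn (n : ℕ) (T : ℝ) (H : Euc n → ℝ → ℝ → Euc n → SymMat n → ℝ)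
    (m : ℝ → ℝ → ℝ) (K : Set (Euc n × ℝ × Euc n × SymMat n)) : Prop :=
  ∀ᵐ t ∂(volume.restrict (Set.Ioo 0 T)),
    ∀ q₁ q₂ : Euc n × ℝ × Euc n × SymMat n, q₁ ∈ K → q₂ ∈ K →
      |H q₁.1 t q₁.2.1 q₁.2.2.1 q₁.2.2.2 - H q₂.1 t q₂.2.1 q₂.2.2.1 q₂.2.2.2| ≤
        m t (dist q₁.1 q₂.1 + dist q₁.2.1 q₂.2.1 + dist q₁.2.2.1 q₂.2.2.1 + dist q₁.2.2.2 q₂.2.2.2)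

/-- `H` satisfies property (M): property M(K) for every compact subset `K` of
`Ω × ℝ × ℝⁿ × S(n)`. -/
def PropM (n : ℕ) (T : ℝ) (Ω : Set (Euc n))
    (H : Euc n → ℝ → ℝ → Euc n → SymMat n → ℝ) : Prop :=
  ∀ K : Set (Euc n × ℝ × Euc n × SymMat n), IsCompact K →
    K ⊆ Ω ×ˢ (Set.univ : Set (ℝ × Euc n × SymMat n)) →
    ∃ m : ℝ → ℝ → ℝ, IsModulus T m ∧ SatisfiesMOn n T H m K

/-- `F(x,t,r,p,X)` is degenerate elliptic: for a.e. `t ∈ (0,T)`, it is nonincreasing in the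
matrix variable. -/
def DegenerateElliptic (n : ℕ) (T : ℝ) (F : Euc n → ℝ → ℝ → Euc n → SymMat n → ℝ) : Prop :=
  ∀ᵐ t ∂(volume.restrict (Set.Ioo 0 T)),
    ∀ x r p (X Y : SymMat n), symLE X Y → F x t r p Y ≤ F x t r p X

/-- The Hessian matrix of `φ` at `x` (with respect to the standard basis). -/
noncomputable def hessMat (n : ℕ) (φ : Euc n → ℝ) (x : Euc n) : Matrix (Fin n) (Fin n) ℝ :=
  Matrix.of fun i j =>
    iteratedFDeriv ℝ 2 φ x (![EuclideanSpace.single i 1, EuclideanSpace.single j 1])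

/-- The (symmetrized) Hessian of `φ` at `x`, as a symmetric matrix; for a `C²` function the
Hessian is symmetric, so the symmetrization is harmless. -/
noncomputable def symHess (n : ℕ) (φ : Euc n → ℝ) (x : Euc n) : SymMat n :=
  ⟨(2:ℝ)⁻¹ • (hessMat n φ x + Matrix.transpose (hessMat n φ x)), by
    unfold Matrix.IsSymm
    rw [Matrix.transpose_smul, Matrix.transpose_add, Matrix.transpose_transpose, add_comm]⟩

/-- `u` is an L¹-viscosity subsolution (in Ishii's sense) of
`u_t + F(x,t,u,Du,D²u) = 0` in `Ω × (0,T)`. -/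
def IsL1Subsolution (n : ℕ) (T : ℝ) (Ω : Set (Euc n))
    (F : Euc n → ℝ → ℝ → Euc n → SymMat n → ℝ) (u : Euc n → ℝ → ℝ) : Prop :=
  UpperSemicontinuousOn (fun p : Euc n × ℝ => u p.1 p.2) (Ω ×ˢ Set.Ioo 0 T) ∧
  ∀ φ : Euc n × ℝ → ℝ, ContDiff ℝ 2 φ →
  ∀ b : ℝ → ℝ, IntegrableOn b (Set.Ioo 0 T) →
  ∀ G : Euc n → ℝ → ℝ → Euc n → SymMat n → ℝ,
    Continuous (fun q : Euc n × ℝ × ℝ × Euc n × SymMat n =>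
      G q.1 q.2.1 q.2.2.1 q.2.2.2.1 q.2.2.2.2) →
  ∀ x₀ t₀, (x₀, t₀) ∈ Ω ×ˢ Set.Ioo 0 T →
    (∃ U ∈ 𝓝 (x₀, u x₀ t₀, gradient (fun y => φ (y, t₀)) x₀, symHess n (fun y => φ (y, t₀)) x₀),
      ∃ I ∈ 𝓝 t₀, ∀ᵐ s ∂(volume : Measure ℝ), s ∈ I →
        ∀ y v q M, (y, v, q, M) ∈ U → b s + G y s v q M ≤ F y s v q M) →
    IsLocalMaxOn
      (fun p : Euc n × ℝ => u p.1 p.2 - φ p + ∫ s in Set.Ioo 0 p.2, b s)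
      (Ω ×ˢ Set.Ioo 0 T) (x₀, t₀) →
    deriv (fun s => φ (x₀, s)) t₀ +
      G x₀ t₀ (u x₀ t₀) (gradient (fun y => φ (y, t₀)) x₀)
        (symHess n (fun y => φ (y, t₀)) x₀) ≤ 0

/-- The half-relaxed upper limit `limsup* u^ε (x,t)` over the domain `D`. -/
noncomputable def limsupStar (n : ℕ) (D : Set (Euc n × ℝ)) (u : ℝ → Euc n → ℝ → ℝ)
    (x : Euc n) (t : ℝ) : ℝ :=
  Filter.limsup (fun q : ℝ × (Euc n × ℝ) => u q.1 q.2.1 q.2.2) ((𝓝[>] (0:ℝ)) ×ˢ 𝓝[D] (x, t))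

/-- The family `(u^ε)_{ε>0}` is locally uniformly bounded on `D`. -/
def LocUnifBounded (n : ℕ) (D : Set (Euc n × ℝ)) (u : ℝ → Euc n → ℝ → ℝ) : Prop :=
  ∀ K ⊆ D, IsCompact K → ∃ C : ℝ, ∀ ε > (0:ℝ), ∀ p ∈ K, |u ε p.1 p.2| ≤ C

/-!
The test function is perturbed to `ψ + z(t) h(x, t)`, where `h` is smooth and close to `H(Dψ)`,
and `z` is `C²` and uniformly close to `w - w_ε`, hence small, with `ż` close to `ẇ - ẇ_ε` in
`L¹`. The new term `ż h` of the time derivative trades `ẇ_ε H(Du)` for `ẇ H(Du)`: it is absorbed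
into the continuous part `G` of the minorant, and what remains, at most
`C |ẇ - ẇ_ε - ż| + δ |ż|`, is absorbed into its integrable part `b`, whose primitive hardly
changes; here the bound on `‖ẇ_ε‖_{L¹}` controls `∫ |ż|`. The term `z Dh` in the gradient is
harmless because violating the subsolution inequality is an open condition on the point, the value
and the jet. A violation for the relaxed limit at a strict maximum thus passes to maxima of
`u^ε` minus the perturbed test function, for which no violation is possible.
-/

/-! ### Relaxed upper limits and convergence of maxima -/

section RelaxedLimsup

variable {ι X : Type*} [TopologicalSpace X] {l : Filter ι} {D : Set X} {u : ι → X → ℝ}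

/-- The half-relaxed upper limit of the family `u`, along the filter `l` on the indices and over
the domain `D`; `limsupStar` is the case `l = 𝓝[>] 0` in space-time. -/
noncomputable def relaxedLimsup (l : Filter ι) (D : Set X) (u : ι → X → ℝ) (x : X) : ℝ :=
  limsup (fun q : ι × X => u q.1 q.2) (l ×ˢ 𝓝[D] x)

/-- The family `u` is, along `l`, bounded near each point of `D`. Without this the real-valued
`relaxedLimsup` may take junk values. -/
def LocallyBoundedAlong (l : Filter ι) (D : Set X) (u : ι → X → ℝ) : Prop :=
  ∀ x ∈ D, ∃ C : ℝ, ∀ᶠ q in l ×ˢ 𝓝[D] x, |u q.1 q.2| ≤ C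

namespace LocallyBoundedAlong

lemma eventually_lt (hu : LocallyBoundedAlong l D u) {x : X} (hx : x ∈ D) {c : ℝ}
    (hc : relaxedLimsup l D u x < c) : ∀ᶠ q in l ×ˢ 𝓝[D] x, u q.1 q.2 < c := by
  obtain ⟨C, hC⟩ := hu x hx
  exact eventually_lt_of_limsup_lt hc
    (isBoundedUnder_of_eventually_le (hC.mono fun q hq => (abs_le.1 hq).2))

variable [l.NeBot]

lemma isCoboundedUnder (hu : LocallyBoundedAlong l D u) {x : X} (hx : x ∈ D) :
    IsCoboundedUnder (· ≤ ·) (l ×ˢ 𝓝[D] x) fun q => u q.1 q.2 := by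
  obtain ⟨C, hC⟩ := hu x hx
  have : (𝓝[D] x).NeBot := nhdsWithin_neBot_of_mem hx
  exact (isBoundedUnder_of_eventually_ge
    (hC.mono fun q hq => (abs_le.1 hq).1)).isCoboundedUnder_le

lemma frequently_lt (hu : LocallyBoundedAlong l D u) {x : X} (hx : x ∈ D) {c : ℝ}
    (hc : c < relaxedLimsup l D u x) : ∃ᶠ q in l ×ˢ 𝓝[D] x, c < u q.1 q.2 :=
  frequently_lt_of_lt_limsup (hu.isCoboundedUnder hx) hc

theorem upperSemicontinuousOn_relaxedLimsup (hu : LocallyBoundedAlong l D u) :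
    UpperSemicontinuousOn (relaxedLimsup l D u) D := by
  intro x hx c hc
  obtain ⟨c', hxc', hc'c⟩ := exists_between hc
  obtain ⟨P, hP, Q, hQ, hPQ⟩ := eventually_prod_iff.1 (hu.eventually_lt hx hxc')
  filter_upwards [eventually_eventually_nhdsWithin.2 hQ, self_mem_nhdsWithin] with y hy hyD
  refine lt_of_le_of_lt (limsup_le_of_le (hu.isCoboundedUnder hyD) ?_) hc'c
  filter_upwards [hP.prod_mk hy] with q hq
  exact (hPQ hq.1 hq.2).le

end LocallyBoundedAlong

lemma eventually_forall_mem_of_isCompact {K : Set X} (hK : IsCompact K) (hKD : K ⊆ D)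
    {P : ι → X → Prop} (h : ∀ x ∈ K, ∀ᶠ q in l ×ˢ 𝓝[D] x, P q.1 q.2) :
    ∀ᶠ i in l, ∀ x ∈ K, P i x := by
  have hmem : {q : ι × X | q.2 ∈ D → P q.1 q.2} ∈ l ×ˢ 𝓝ˢ K := by
    refine hK.mem_prod_nhdsSet_of_forall fun x hx => ?_
    obtain ⟨A, hA, B, hB, hAB⟩ := eventually_prod_iff.1 (h x hx)
    filter_upwards [hA.prod_mk (eventually_nhdsWithin_iff.1 hB)] with q hq hqD
    exact hAB hq.1 (hq.2 hqD)
  obtain ⟨A, hA, B, hB, hAB⟩ := eventually_prod_iff.1 hmem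
  filter_upwards [hA] with i hi x hx
  exact hAB hi (hB.self_of_nhdsSet x hx) (hKD hx)

section StrictMax

variable {f : X → ℝ} {N : Set X} {x₀ : X} {W : Set (X × ℝ)}

lemma LocallyBoundedAlong.eventually_mem_nhds_of_almost_max (hu : LocallyBoundedAlong l D u)
    (hf : ContinuousOn f D) (hN : IsCompact N) (hND : N ⊆ D)
    (hstrict : ∀ x ∈ N, x ≠ x₀ →
      relaxedLimsup l D u x + f x < relaxedLimsup l D u x₀ + f x₀)
    (hW : W ∈ 𝓝 (x₀, relaxedLimsup l D u x₀)) :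
    ∀ᶠ j in 𝓝 (0 : ℝ) ×ˢ l, ∀ x ∈ N,
      relaxedLimsup l D u x₀ + f x₀ - j.1 ≤ u j.2 x + f x → (x, u j.2 x) ∈ W := by
  refine eventually_forall_mem_of_isCompact hN hND fun x hx => ?_
  have hη : Tendsto (fun q : (ℝ × ι) × X => q.1.1) ((𝓝 0 ×ˢ l) ×ˢ 𝓝[D] x) (𝓝 0) :=
    tendsto_fst.comp tendsto_fst
  have hfx : Tendsto (fun q : (ℝ × ι) × X => f q.2) ((𝓝 0 ×ˢ l) ×ˢ 𝓝[D] x) (𝓝 (f x)) :=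
    (hf x (hND hx)).tendsto.comp tendsto_snd
  have hux {c : ℝ} (hc : relaxedLimsup l D u x < c) :
      ∀ᶠ q in (𝓝 (0 : ℝ) ×ˢ l) ×ˢ 𝓝[D] x, u q.1.2 q.2 < c :=
    (tendsto_snd.prodMap tendsto_id).eventually (hu.eventually_lt (hND hx) hc)
  have hlow {c : ℝ} (hc : c < relaxedLimsup l D u x₀ + f x₀ - f x) :
      ∀ᶠ q in (𝓝 (0 : ℝ) ×ˢ l) ×ˢ 𝓝[D] x,
        c < relaxedLimsup l D u x₀ + f x₀ - q.1.1 - f q.2 :=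
    ((tendsto_const_nhds.sub hη).sub hfx).eventually_const_lt (by simpa using hc)
  rcases eq_or_ne x x₀ with rfl | hne
  · obtain ⟨V, hV, ρ, hρ, hVρ⟩ : ∃ V ∈ 𝓝 x, ∃ ρ > 0,
        V ×ˢ Metric.ball (relaxedLimsup l D u x) ρ ⊆ W := by
      obtain ⟨V, hV, S, hS, hVS⟩ := mem_nhds_prod_iff.1 hW
      obtain ⟨ρ, hρ, hρS⟩ := Metric.mem_nhds_iff.1 hS
      exact ⟨V, hV, ρ, hρ, (Set.prod_mono_right hρS).trans hVS⟩
    have hqV : ∀ᶠ q in (𝓝 (0 : ℝ) ×ˢ l) ×ˢ 𝓝[D] x, q.2 ∈ V :=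
      tendsto_snd.eventually (mem_nhdsWithin_of_mem_nhds hV)
    filter_upwards [hux (lt_add_of_pos_right _ hρ), hqV,
      hlow (c := relaxedLimsup l D u x - ρ) (by linarith)] with q hup hq hdown hmax
    refine hVρ ⟨hq, ?_⟩
    rw [Metric.mem_ball, Real.dist_eq, abs_sub_lt_iff]
    constructor <;> linarith
  · obtain ⟨c, hxc, hc⟩ := exists_between (lt_sub_iff_add_lt.2 (hstrict x hx hne))
    filter_upwards [hux hxc, hlow hc] with q hup hdown hmax
    linarith

lemma LocallyBoundedAlong.frequently_exists_almost_max [l.NeBot] (hu : LocallyBoundedAlong l D u)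
    (hf : ContinuousOn f D) (hx₀ : x₀ ∈ D) (hN : N ∈ 𝓝[D] x₀) {η : ℝ} (hη : 0 < η) :
    ∃ᶠ i in l, ∃ y ∈ N, relaxedLimsup l D u x₀ + f x₀ - η ≤ u i y + f y := by
  have hfx₀ : ∀ᶠ q : ι × X in l ×ˢ 𝓝[D] x₀, f x₀ - η / 2 < f q.2 :=
    ((hf x₀ hx₀).tendsto.comp tendsto_snd).eventually_const_lt (by linarith)
  have hfreq : ∃ᶠ q in l ×ˢ 𝓝[D] x₀,
      ∃ y ∈ N, relaxedLimsup l D u x₀ + f x₀ - η ≤ u q.1 y + f y := by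
    refine ((hu.frequently_lt (c := relaxedLimsup l D u x₀ - η / 2) hx₀
      (by linarith)).and_eventually (hfx₀.and (tendsto_snd.eventually hN))).mono
      fun q ⟨hq, hfq, hqN⟩ => ⟨q.2, hqN, ?_⟩
    linarith [hq, hfq]
  exact tendsto_fst.frequently
    (p := fun i => ∃ y ∈ N, relaxedLimsup l D u x₀ + f x₀ - η ≤ u i y + f y) hfreq

theorem LocallyBoundedAlong.exists_frequently_forall_exists_isMaxOn [l.NeBot]
    (hu : LocallyBoundedAlong l D u) (husc : ∀ᶠ i in l, UpperSemicontinuousOn (u i) D)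
    (hf : ContinuousOn f D) (hN : IsCompact N) (hND : N ⊆ D) (hNx₀ : N ∈ 𝓝[D] x₀) (hx₀ : x₀ ∈ D)
    (hstrict : ∀ x ∈ N, x ≠ x₀ →
      relaxedLimsup l D u x + f x < relaxedLimsup l D u x₀ + f x₀)
    (hW : W ∈ 𝓝 (x₀, relaxedLimsup l D u x₀)) :
    ∃ η > 0, ∃ᶠ i in l, ∀ f' : X → ℝ, ContinuousOn f' N → (∀ x ∈ N, |f' x - f x| ≤ η) →
      ∃ x ∈ N, IsMaxOn (fun y => u i y + f' y) N x ∧ (x, u i x) ∈ W := by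
  obtain ⟨η, hev, hη⟩ : ∃ η : ℝ, (∀ᶠ i in l, ∀ x ∈ N,
      relaxedLimsup l D u x₀ + f x₀ - η ≤ u i x + f x → (x, u i x) ∈ W) ∧ 0 < η :=
    (((hu.eventually_mem_nhds_of_almost_max hf hN hND hstrict hW).curry.filter_mono
      nhdsWithin_le_nhds).and self_mem_nhdsWithin).exists (f := 𝓝[>] (0 : ℝ))
  refine ⟨η / 4, by positivity, ((hu.frequently_exists_almost_max hf hx₀ hNx₀
    (half_pos hη)).and_eventually (hev.and husc)).mono ?_⟩
  rintro i ⟨⟨y, hy, hle⟩, hi, husci⟩ f' hf' hclose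
  obtain ⟨x, hx, hmax⟩ := ((husci.mono hND).add hf'.upperSemicontinuousOn).exists_isMaxOn
    ⟨y, hy⟩ hN
  refine ⟨x, hx, hmax, hi x hx ?_⟩
  have hyx : u i y + f' y ≤ u i x + f' x := hmax hy
  have hcy := abs_le.1 (hclose y hy)
  have hcx := abs_le.1 (hclose x hx)
  linarith

end StrictMax

end RelaxedLimsup

/-! ### Parabolic jets -/

section ParabolicJet

variable {P : Type*} [NormedAddCommGroup P] [NormedSpace ℝ P] {n : ℕ}

lemma continuous_gradient_of_contDiff {E : Type*} [NormedAddCommGroup E] [InnerProductSpace ℝ E]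
    [CompleteSpace E] {f : P → E → ℝ} {g : P → E} (hf : ContDiff ℝ 1 (Function.uncurry f))
    (hg : Continuous g) : Continuous fun x => gradient (f x) (g x) :=
  (InnerProductSpace.toDual ℝ E).symm.continuous.comp (.fderiv_one hf hg)

lemma continuous_symHess_of_contDiff {f : P → Euc n → ℝ} {g : P → Euc n}
    (hf : ContDiff ℝ 2 (Function.uncurry f)) (hg : Continuous g) :
    Continuous fun x => symHess n (f x) (g x) := by
  have hfderiv : ContDiff ℝ 1 (Function.uncurry fun x => fderiv ℝ (f x)) :=
    ContDiff.fderiv (f := fun q : P × Euc n => f q.1)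
      (hf.comp ((contDiff_fst.comp contDiff_fst).prodMk contDiff_snd)) contDiff_snd le_rfl
  have hhess : Continuous fun x => hessMat n (f x) (g x) := by
    refine continuous_matrix fun i j => ?_
    simp only [hessMat, Matrix.of_apply, iteratedFDeriv_two_apply]
    exact ((Continuous.fderiv_one hfderiv hg).clm_apply continuous_const).clm_apply continuous_const
  have hsym : Continuous fun x =>
      (2 : ℝ)⁻¹ • (hessMat n (f x) (g x) + (hessMat n (f x) (g x)).transpose) :=
    (hhess.add hhess.matrix_transpose).fun_const_smul _
  exact hsym.subtype_mk _

/-- The value of `φ_t`, `Dφ` and `D²φ` at a point of space-time. -/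
noncomputable def parabolicJet (φ : Euc n × ℝ → ℝ) (p : Euc n × ℝ) : ℝ × Euc n × SymMat n :=
  (deriv (fun s => φ (p.1, s)) p.2, gradient (fun y => φ (y, p.2)) p.1,
    symHess n (fun y => φ (y, p.2)) p.1)

lemma continuous_parabolicJet {Φ : P → Euc n × ℝ → ℝ} (hΦ : ContDiff ℝ 2 (Function.uncurry Φ)) :
    Continuous fun x : P × (Euc n × ℝ) => parabolicJet (Φ x.1) x.2 := by
  have hspace : ContDiff ℝ 2
      (Function.uncurry fun (x : P × (Euc n × ℝ)) (y : Euc n) => Φ x.1 (y, x.2.2)) :=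
    hΦ.comp (f := fun q : (P × (Euc n × ℝ)) × Euc n => (q.1.1, q.2, q.1.2.2)) (by fun_prop)
  have htime : ContDiff ℝ 1
      (Function.uncurry fun (x : P × (Euc n × ℝ)) (s : ℝ) => Φ x.1 (x.2.1, s)) :=
    (hΦ.of_le one_le_two).comp (f := fun q : (P × (Euc n × ℝ)) × ℝ => (q.1.1, q.1.2.1, q.2))
      (by fun_prop)
  refine .prodMk ?_ (.prodMk ?_ ?_)
  · simp only [← fderiv_apply_one_eq_deriv]
    exact (Continuous.fderiv_one htime (by fun_prop)).clm_apply continuous_const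
  · exact continuous_gradient_of_contDiff (hspace.of_le one_le_two) (by fun_prop)
  · exact continuous_symHess_of_contDiff hspace (by fun_prop)

lemma parabolicJet_add_mul {ψ h : Euc n × ℝ → ℝ} {z : ℝ → ℝ} (hψ : Differentiable ℝ ψ)
    (hh : Differentiable ℝ h) (hz : Differentiable ℝ z) (p : Euc n × ℝ) :
    parabolicJet (fun q => ψ q + z q.2 * h q) p =
      ((parabolicJet (fun q => ψ q + z p.2 * h q) p).1 + deriv z p.2 * h p,
        (parabolicJet (fun q => ψ q + z p.2 * h q) p).2) := by
  refine Prod.ext ?_ rfl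
  have hψ' : DifferentiableAt ℝ (fun s => ψ (p.1, s)) p.2 := by fun_prop
  have hh' : DifferentiableAt ℝ (fun s => h (p.1, s)) p.2 := by fun_prop
  simp only [parabolicJet]
  rw [deriv_fun_add hψ' ((hz _).fun_mul hh'), deriv_fun_mul (hz _) hh',
    deriv_fun_add hψ' (hh'.const_mul _), deriv_const_mul _ hh']
  ring

end ParabolicJet

/-! ### Violations of the subsolution property -/

section Violation

variable {n : ℕ} {b : ℝ → ℝ} {F G : Euc n → ℝ → ℝ → Euc n → SymMat n → ℝ}

/-- The inequality `b + G ≤ F` holds near the time `t` and the point `ξ = (x, r, p, X)`: the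
condition on the minorants `b + G` of `F` in Ishii's definition. -/
def MinorizesAt (b : ℝ → ℝ) (G F : Euc n → ℝ → ℝ → Euc n → SymMat n → ℝ) (t : ℝ)
    (ξ : Euc n × ℝ × Euc n × SymMat n) : Prop :=
  ∃ U ∈ 𝓝 ξ, ∃ I ∈ 𝓝 t, ∀ᵐ s ∂(volume : Measure ℝ), s ∈ I →
    ∀ y v q M, (y, v, q, M) ∈ U → b s + G y s v q M ≤ F y s v q M

/-- The value `r` and the parabolic jet `j` at `p` contradict the subsolution property for `F`,
as witnessed by the minorant `b + G` of `F`. -/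
structure Violates (b : ℝ → ℝ) (G F : Euc n → ℝ → ℝ → Euc n → SymMat n → ℝ) (p : Euc n × ℝ)
    (r : ℝ) (j : ℝ × Euc n × SymMat n) : Prop where
  minorizesAt : MinorizesAt b G F p.2 (p.1, r, j.2)
  pos : 0 < j.1 + G p.1 p.2 r j.2.1 j.2.2

theorem isL1Subsolution_iff {T : ℝ} {Ω : Set (Euc n)} {u : Euc n → ℝ → ℝ} :
    IsL1Subsolution n T Ω F u ↔
      UpperSemicontinuousOn (fun p : Euc n × ℝ => u p.1 p.2) (Ω ×ˢ Set.Ioo 0 T) ∧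
      ∀ φ : Euc n × ℝ → ℝ, ContDiff ℝ 2 φ → ∀ b : ℝ → ℝ, IntegrableOn b (Set.Ioo 0 T) →
        ∀ G : Euc n → ℝ → ℝ → Euc n → SymMat n → ℝ,
          Continuous (fun q : Euc n × ℝ × ℝ × Euc n × SymMat n =>
            G q.1 q.2.1 q.2.2.1 q.2.2.2.1 q.2.2.2.2) →
          ∀ p ∈ Ω ×ˢ Set.Ioo 0 T,
            IsLocalMaxOn (fun q : Euc n × ℝ => u q.1 q.2 - φ q + ∫ s in Set.Ioo 0 q.2, b s)
              (Ω ×ˢ Set.Ioo 0 T) p → ¬ Violates b G F p (u p.1 p.2) (parabolicJet φ p) := by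
  refine and_congr_right fun _ => ⟨fun h φ hφ b hb G hG p hp hmax hviol => ?_,
    fun h φ hφ b hb G hG x t hxt hmin hmax => ?_⟩
  · exact (h φ hφ b hb G hG p.1 p.2 hp hviol.minorizesAt hmax).not_gt hviol.pos
  · exact not_lt.1 fun hpos => h φ hφ b hb G hG (x, t) hxt hmax ⟨hmin, hpos⟩

lemma MinorizesAt.eventually {t : ℝ} {ξ : Euc n × ℝ × Euc n × SymMat n}
    (h : MinorizesAt b G F t ξ) : ∀ᶠ x in 𝓝 (t, ξ), MinorizesAt b G F x.1 x.2 := by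
  obtain ⟨U, hU, I, hI, hle⟩ := h
  filter_upwards [prod_mem_nhds (eventually_mem_nhds_iff.2 hI) (eventually_mem_nhds_iff.2 hU)]
    with x hx using ⟨U, hx.2, I, hx.1, hle⟩

lemma Violates.eventually {p : Euc n × ℝ} {r : ℝ} {j : ℝ × Euc n × SymMat n}
    (hG : Continuous (fun q : Euc n × ℝ × ℝ × Euc n × SymMat n =>
      G q.1 q.2.1 q.2.2.1 q.2.2.2.1 q.2.2.2.2))
    (h : Violates b G F p r j) :
    ∀ᶠ x in 𝓝 ((p, r), j), Violates b G F x.1.1 x.1.2 x.2 := by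
  have hmin : Tendsto (fun x : ((Euc n × ℝ) × ℝ) × ℝ × Euc n × SymMat n =>
      (x.1.1.2, x.1.1.1, x.1.2, x.2.2)) (𝓝 ((p, r), j)) (𝓝 (p.2, p.1, r, j.2)) :=
    Continuous.tendsto (by fun_prop) _
  have hpos : Continuous fun x : ((Euc n × ℝ) × ℝ) × ℝ × Euc n × SymMat n =>
      x.2.1 + G x.1.1.1 x.1.1.2 x.1.2 x.2.2.1 x.2.2.2 :=
    (by fun_prop : Continuous fun x : ((Euc n × ℝ) × ℝ) × ℝ × Euc n × SymMat n => x.2.1).add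
      (hG.comp (f := fun x : ((Euc n × ℝ) × ℝ) × ℝ × Euc n × SymMat n =>
        (x.1.1.1, x.1.1.2, x.1.2, x.2.2.1, x.2.2.2)) (by fun_prop))
  filter_upwards [hmin.eventually h.minorizesAt.eventually,
    hpos.continuousAt.eventually_const_lt h.pos] with x hx hx' using ⟨hx, hx'⟩

/-- Majorant of the error made when `a * H` is replaced by `a₀ * H - g * h` in the equation, at
gradients where `|H| ≤ C` and `|H - h| ≤ δ`. -/
noncomputable def correctionError (C δ : ℝ) (a₀ a g : ℝ → ℝ) (s : ℝ) : ℝ :=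
  C * |a₀ s - a s - g s| + δ * |g s|

-- With `e = a₀ - a - g`, one has `a * H = a₀ * H - g * h - e * H - g * (H - h)`.
lemma Violates.correct {H : Euc n → ℝ} {h : Euc n × ℝ → ℝ} {a a₀ g : ℝ → ℝ} {C δ r : ℝ}
    {p : Euc n × ℝ} {j : ℝ × Euc n × SymMat n} (hH : Continuous H) (hh : Continuous h)
    (hviol : Violates b G (fun x t r p X => F x t r p X + a₀ t * H p) p r j)
    (hC : |H j.2.1| < C) (hδ : |H j.2.1 - h p| < δ) :
    Violates (fun s => b s - correctionError C δ a₀ a g s)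
      (fun x t r p X => G x t r p X - g t * h (x, t))
      (fun x t r p X => F x t r p X + a t * H p) p r (j.1 + g p.2 * h p, j.2) := by
  obtain ⟨⟨U, hU, I, hI, hle⟩, hpos⟩ := hviol
  refine ⟨?_, by simpa [add_assoc] using hpos⟩
  have hHq : Continuous fun x : ℝ × Euc n × ℝ × Euc n × SymMat n => |H x.2.2.2.1| := by fun_prop
  have hHh : Continuous fun x : ℝ × Euc n × ℝ × Euc n × SymMat n =>
      |H x.2.2.2.1 - h (x.2.1, x.1)| := by fun_prop
  have hnear : ∀ᶠ x in 𝓝 (p.2, p.1, r, j.2),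
      |H x.2.2.2.1| < C ∧ |H x.2.2.2.1 - h (x.2.1, x.1)| < δ :=
    ((hHq.tendsto _).eventually_lt_const hC).and ((hHh.tendsto _).eventually_lt_const hδ)
  rw [nhds_prod_eq] at hnear
  obtain ⟨A, hA, B, hB, hAB⟩ := eventually_prod_iff.1 hnear
  refine ⟨{ξ | B ξ} ∩ U, inter_mem hB hU, {s | A s} ∩ I, inter_mem hA hI, ?_⟩
  filter_upwards [hle] with s hs hsI y v q M hξ
  obtain ⟨hHC, hHδ⟩ := hAB hsI.1 hξ.1
  have herr : (a₀ s - a s - g s) * H q ≤ C * |a₀ s - a s - g s| := by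
    refine (le_abs_self _).trans ?_
    rw [abs_mul, mul_comm]
    exact mul_le_mul_of_nonneg_right hHC.le (abs_nonneg _)
  have hcor : g s * (H q - h (y, s)) ≤ δ * |g s| := by
    refine (le_abs_self _).trans ?_
    rw [abs_mul, mul_comm]
    exact mul_le_mul_of_nonneg_right hHδ.le (abs_nonneg _)
  simp only [correctionError]
  linarith [hs hsI.2 y v q M hξ.2]

end Violation

/-! ### Primitives on an interval -/

section Primitive

variable {T : ℝ}

lemma abs_setIntegral_sub_setIntegral_le {α : Type*} [MeasurableSpace α] {μ : Measure α}
    {f g : α → ℝ} {s t : Set α} (hf : IntegrableOn f t μ) (hg : IntegrableOn g t μ) (hst : s ⊆ t) :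
    |∫ x in s, f x ∂μ - ∫ x in s, g x ∂μ| ≤ ∫ x in t, |f x - g x| ∂μ := by
  rw [← integral_sub (hf.mono_set hst) (hg.mono_set hst)]
  exact abs_integral_le_integral_abs.trans
    (setIntegral_mono_set (hf.sub hg).abs (.of_forall fun x => abs_nonneg _) hst.eventuallyLE)

lemma integral_abs_sub_le {α : Type*} [MeasurableSpace α] {μ : Measure α} {f g : α → ℝ}
    (hf : Integrable f μ) (hg : Integrable g μ) :
    ∫ x, |f x - g x| ∂μ ≤ (∫ x, |f x| ∂μ) + ∫ x, |g x| ∂μ := by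
  rw [← integral_add hf.abs hg.abs]
  exact integral_mono (hf.sub hg).abs (hf.abs.add hg.abs) fun x => abs_sub _ _

lemma continuousOn_setIntegral_Ioo {b : ℝ → ℝ} (hb : IntegrableOn b (Set.Ioo 0 T)) :
    ContinuousOn (fun t => ∫ s in Set.Ioo 0 t, b s) (Set.Ioo 0 T) := by
  have hprim := intervalIntegral.continuousOn_primitive
    ((integrableOn_Icc_iff_integrableOn_Ioo).2 hb)
  simp only [integral_Ioc_eq_integral_Ioo] at hprim
  exact hprim.mono Set.Ioo_subset_Icc_self

lemma integrableOn_deriv_of_contDiff {z : ℝ → ℝ} (hz : ContDiff ℝ 1 z) :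
    IntegrableOn (deriv z) (Set.Ioo 0 T) :=
  (hz.continuous_deriv le_rfl).integrableOn_Icc.mono_set Set.Ioo_subset_Icc_self

lemma exists_contDiff_integral_abs_sub_deriv_le {f : ℝ → ℝ} (hf : IntegrableOn f (Set.Ioo 0 T))
    {τ : ℝ} (hτ : 0 < τ) :
    ∃ z : ℝ → ℝ, ContDiff ℝ 2 z ∧ ∫ s in Set.Ioo 0 T, |f s - deriv z s| ≤ τ ∧
      ∀ t ∈ Set.Ioo 0 T, |(∫ s in Set.Ioo 0 t, f s) - z t| ≤ τ := by
  obtain ⟨g, hgsupp, hgsmooth, hfg⟩ := MemLp.exist_eLpNorm_sub_le ENNReal.one_ne_top le_rfl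
    (memLp_one_iff_integrable.2 hf) hτ
  have hg : Continuous g := hgsmooth.continuous
  have hgint : IntegrableOn g (Set.Ioo 0 T) :=
    (hg.integrable_of_hasCompactSupport hgsupp).integrableOn
  have hderiv : deriv (fun t => ∫ s in (0 : ℝ)..t, g s) = g := funext (hg.deriv_integral g 0)
  have hclose : ∫ s in Set.Ioo 0 T, |f s - g s| ≤ τ := by
    have hnorm := integral_norm_eq_lintegral_enorm (hf.sub hgint).aestronglyMeasurable
    rw [← eLpNorm_one_eq_lintegral_enorm] at hnorm
    exact hnorm.trans_le (ENNReal.toReal_le_of_le_ofReal hτ.le hfg)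
  refine ⟨fun t => ∫ s in (0 : ℝ)..t, g s, ?_, by rwa [hderiv], fun t ht => ?_⟩
  · refine (contDiff_succ_iff_deriv (n := 1)).2 ⟨fun t => ?_, by simp, ?_⟩
    · exact intervalIntegral.differentiable_integral_of_continuous hg t
    · rw [hderiv]
      exact hgsmooth.of_le (mod_cast le_top)
  · beta_reduce
    rw [intervalIntegral.integral_of_le ht.1.le, integral_Ioc_eq_integral_Ioo]
    exact (abs_setIntegral_sub_setIntegral_le hf hgint (Set.Ioo_subset_Ioo_right ht.2.le)).trans
      hclose

variable {ι : Type*} {l : Filter ι} {a : ι → ℝ → ℝ} {a₀ : ℝ → ℝ} {C τ : ℝ}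

lemma eventually_exists_contDiff_integral_abs_sub_sub_deriv_le
    (ha : ∀ᶠ i in l, IntegrableOn (a i) (Set.Ioo 0 T)) (ha₀ : IntegrableOn a₀ (Set.Ioo 0 T))
    (hC : ∀ᶠ i in l, ∫ s in Set.Ioo 0 T, |a i s| ≤ C)
    (hconv : TendstoUniformlyOn (fun i t => ∫ s in Set.Ioo 0 t, a i s)
      (fun t => ∫ s in Set.Ioo 0 t, a₀ s) l (Set.Ioo 0 T)) (hτ : 0 < τ) :
    ∀ᶠ i in l, ∃ z : ℝ → ℝ, ContDiff ℝ 2 z ∧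
      ∫ s in Set.Ioo 0 T, |a₀ s - a i s - deriv z s| ≤ τ ∧
      ∫ s in Set.Ioo 0 T, |deriv z s| ≤ C + (∫ s in Set.Ioo 0 T, |a₀ s|) + τ ∧
      ∀ t ∈ Set.Ioo 0 T, |z t| < τ := by
  filter_upwards [ha, hC, Metric.tendstoUniformlyOn_iff.1 hconv (τ / 2) (half_pos hτ)]
    with i hi hCi hconvi
  obtain ⟨z, hz, hz', hzt⟩ := exists_contDiff_integral_abs_sub_deriv_le (ha₀.sub hi) (half_pos hτ)
  refine ⟨z, hz, hz'.trans (half_le_self hτ.le), ?_, fun t ht => ?_⟩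
  · have hdiff := integral_abs_sub_le ha₀ hi
    have hdiff' := integral_abs_sub_le (ha₀.sub hi)
      ((ha₀.sub hi).sub (integrableOn_deriv_of_contDiff (hz.of_le one_le_two)))
    simp only [Pi.sub_apply, sub_sub_cancel] at hz' hdiff'
    linarith
  · have hsub : Set.Ioo 0 t ⊆ Set.Ioo 0 T := Set.Ioo_subset_Ioo_right ht.2.le
    have hzt' := hzt t ht
    simp only [Pi.sub_apply] at hzt'
    rw [integral_sub (ha₀.mono_set hsub) (hi.mono_set hsub)] at hzt'
    have hdist := hconvi t ht
    rw [Real.dist_eq] at hdist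
    rw [abs_lt] at hdist ⊢
    rw [abs_le] at hzt'
    constructor <;> linarith [hdist.1, hdist.2, hzt'.1, hzt'.2]

end Primitive

/-! ### Perturbation of the test function -/

section Perturbation

variable {n : ℕ} {b : ℝ → ℝ} {F G : Euc n → ℝ → ℝ → Euc n → SymMat n → ℝ} {ψ : Euc n × ℝ → ℝ}
  {p₀ : Euc n × ℝ}

lemma exists_contDiff_eq_zero_and_pos {E : Type*} [NormedAddCommGroup E] [InnerProductSpace ℝ E]
    (p₀ : E × ℝ) : ∃ ρ : E × ℝ → ℝ, ContDiff ℝ 2 ρ ∧ ρ p₀ = 0 ∧ ∀ p ≠ p₀, 0 < ρ p := by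
  refine ⟨fun p => ‖p.1 - p₀.1‖ ^ 2 + (p.2 - p₀.2) ^ 2, ?_, by simp, fun p hp => ?_⟩
  · exact ((contDiff_fst.sub contDiff_const).norm_sq ℝ).add
      ((contDiff_snd.sub contDiff_const).pow 2)
  · by_contra! hle
    have hfst : ‖p.1 - p₀.1‖ = 0 := by nlinarith [sq_nonneg ‖p.1 - p₀.1‖, sq_nonneg (p.2 - p₀.2)]
    have hsnd : p.2 - p₀.2 = 0 := by nlinarith [sq_nonneg ‖p.1 - p₀.1‖, sq_nonneg (p.2 - p₀.2)]
    exact hp (Prod.ext (sub_eq_zero.1 (norm_eq_zero.1 hfst)) (sub_eq_zero.1 hsnd))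

lemma continuous_parabolicJet_add_const_mul {h : Euc n × ℝ → ℝ} (hψ : ContDiff ℝ 2 ψ)
    (hh : ContDiff ℝ 2 h) :
    Continuous fun x : ℝ × Euc n × ℝ => parabolicJet (fun q => ψ q + x.1 * h q) x.2 :=
  continuous_parabolicJet (Φ := fun c q => ψ q + c * h q)
    ((hψ.comp contDiff_snd).add (contDiff_fst.mul (hh.comp contDiff_snd)))

lemma Violates.exists_isCompact_strict_max {D : Set (Euc n × ℝ)} {v : Euc n × ℝ → ℝ} {r : ℝ}
    (hviol : Violates b G F p₀ r (parabolicJet ψ p₀))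
    (hG : Continuous (fun q : Euc n × ℝ × ℝ × Euc n × SymMat n =>
      G q.1 q.2.1 q.2.2.1 q.2.2.2.1 q.2.2.2.2)) (hψ : ContDiff ℝ 2 ψ) (hD : D ∈ 𝓝 p₀)
    (hmax : IsLocalMaxOn (fun q => v q - ψ q) D p₀) :
    ∃ ψ' : Euc n × ℝ → ℝ, ContDiff ℝ 2 ψ' ∧ Violates b G F p₀ r (parabolicJet ψ' p₀) ∧
      ∃ N ∈ 𝓝 p₀, IsCompact N ∧ N ⊆ D ∧ ∀ p ∈ N, p ≠ p₀ → v p - ψ' p < v p₀ - ψ' p₀ := by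
  obtain ⟨ρ, hρ, hρ₀, hρpos⟩ := exists_contDiff_eq_zero_and_pos p₀
  have hjet : Tendsto (fun c : ℝ => ((p₀, r), parabolicJet (fun q => ψ q + c * ρ q) p₀))
      (𝓝 0) (𝓝 ((p₀, r), parabolicJet ψ p₀)) := by
    have hcont : Continuous fun c : ℝ => parabolicJet (fun q => ψ q + c * ρ q) p₀ :=
      (continuous_parabolicJet_add_const_mul hψ hρ).comp (.prodMk_left p₀)
    exact tendsto_const_nhds.prodMk_nhds (by simpa using hcont.tendsto 0)
  obtain ⟨c, hc, hc₀⟩ : ∃ c : ℝ, Violates b G F p₀ r (parabolicJet (fun q => ψ q + c * ρ q) p₀) ∧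
      0 < c := (((hjet.eventually (hviol.eventually hG)).filter_mono nhdsWithin_le_nhds).and
        self_mem_nhdsWithin).exists (f := 𝓝[>] (0 : ℝ))
  obtain ⟨N, hN, hNmax, hNc⟩ := local_compact_nhds
    (inter_mem hD (hmax.filter_mono (nhdsWithin_eq_nhds.2 hD).ge))
  refine ⟨fun q => ψ q + c * ρ q, hψ.add (contDiff_const.mul hρ), hc, N, hN, hNc,
    fun p hp => (hNmax hp).1, fun p hp hne => ?_⟩
  have hle : v p - ψ p ≤ v p₀ - ψ p₀ := (hNmax hp).2
  have hpos := mul_pos hc₀ (hρpos p hne)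
  simp only [hρ₀]
  linarith

lemma eventually_forall_violates_add_const_mul {H : Euc n → ℝ} {h : Euc n × ℝ → ℝ} {C δ : ℝ}
    {K : Set ((Euc n × ℝ) × ℝ)} (hK : IsCompact K)
    (hG : Continuous (fun q : Euc n × ℝ × ℝ × Euc n × SymMat n =>
      G q.1 q.2.1 q.2.2.1 q.2.2.2.1 q.2.2.2.2))
    (hH : Continuous H) (hψ : ContDiff ℝ 2 ψ) (hh : ContDiff ℝ 2 h)
    (hviol : ∀ x ∈ K, Violates b G F x.1 x.2 (parabolicJet ψ x.1))
    (hC : ∀ x ∈ K, |H (parabolicJet ψ x.1).2.1| < C)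
    (hδ : ∀ x ∈ K, |H (parabolicJet ψ x.1).2.1 - h x.1| < δ) :
    ∀ᶠ c in 𝓝 (0 : ℝ), ∀ x ∈ K,
      Violates b G F x.1 x.2 (parabolicJet (fun q => ψ q + c * h q) x.1) ∧
      |H (parabolicJet (fun q => ψ q + c * h q) x.1).2.1| < C ∧
      |H (parabolicJet (fun q => ψ q + c * h q) x.1).2.1 - h x.1| < δ := by
  refine hK.eventually_forall_of_forall_eventually fun x hx => ?_
  have hjet : Continuous fun y : ℝ × (Euc n × ℝ) × ℝ =>
      parabolicJet (fun q => ψ q + y.1 * h q) y.2.1 :=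
    (continuous_parabolicJet_add_const_mul hψ hh).comp
      (f := fun y : ℝ × (Euc n × ℝ) × ℝ => (y.1, y.2.1)) (by fun_prop)
  have hHjet := hH.comp hjet.snd.fst
  have hjet₀ : Tendsto (fun y : ℝ × (Euc n × ℝ) × ℝ =>
      (y.2, parabolicJet (fun q => ψ q + y.1 * h q) y.2.1)) (𝓝 (0, x))
      (𝓝 (x, parabolicJet ψ x.1)) := by
    simpa using (continuous_snd.prodMk hjet).tendsto (0, x)
  refine (hjet₀.eventually ((hviol x hx).eventually hG)).and (.and ?_ ?_)
  · exact (hHjet.abs.tendsto (0, x)).eventually_lt_const (by simpa using hC x hx)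
  · exact ((hHjet.sub (hh.continuous.comp continuous_snd.fst)).abs.tendsto
      (0, x)).eventually_lt_const (by simpa using hδ x hx)

end Perturbation

/-! ### Stability -/

section Stability

variable {n : ℕ} {T : ℝ} {Ω : Set (Euc n)} {F G : Euc n → ℝ → ℝ → Euc n → SymMat n → ℝ}
  {H : Euc n → ℝ} {ψ h : Euc n × ℝ → ℝ} {z a a₀ b : ℝ → ℝ} {C δ : ℝ}

lemma integrableOn_correctionError {g : ℝ → ℝ} {S : Set ℝ} (ha : IntegrableOn a S)
    (ha₀ : IntegrableOn a₀ S) (hg : IntegrableOn g S) :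
    IntegrableOn (correctionError C δ a₀ a g) S :=
  (((ha₀.sub ha).sub hg).abs.const_mul C).add (hg.abs.const_mul δ)

lemma abs_setIntegral_sub_correctionError_sub_le {g : ℝ → ℝ} {S S' : Set ℝ} {τ M : ℝ}
    (ha : IntegrableOn a S) (ha₀ : IntegrableOn a₀ S) (hg : IntegrableOn g S)
    (hb : IntegrableOn b S) (hC : 0 ≤ C) (hδ : 0 ≤ δ) (hS : S' ⊆ S)
    (hτ : ∫ s in S, |a₀ s - a s - g s| ≤ τ) (hM : ∫ s in S, |g s| ≤ M) :
    |(∫ s in S', (b s - correctionError C δ a₀ a g s)) - ∫ s in S', b s| ≤ C * τ + δ * M := by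
  have herr : IntegrableOn (correctionError C δ a₀ a g) S := integrableOn_correctionError ha ha₀ hg
  have habs (s : ℝ) : |b s - correctionError C δ a₀ a g s - b s| =
      C * |a₀ s - a s - g s| + δ * |g s| := by
    rw [sub_sub_cancel_left, abs_neg, correctionError, abs_of_nonneg (by positivity)]
  refine (abs_setIntegral_sub_setIntegral_le (hb.sub herr) hb hS).trans ?_
  have hdiff : IntegrableOn (fun s => C * |a₀ s - a s - g s|) S :=
    ((ha₀.sub ha).sub hg).abs.const_mul C
  simp only [Pi.sub_apply, habs]
  rw [integral_add hdiff (hg.abs.const_mul δ), integral_const_mul, integral_const_mul]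
  gcongr

theorem IsL1Subsolution.not_violates_of_isLocalMaxOn {v : Euc n → ℝ → ℝ} {p : Euc n × ℝ}
    (hv : IsL1Subsolution n T Ω (fun x t r p X => F x t r p X + a t * H p) v)
    (hH : Continuous H)
    (hG : Continuous (fun q : Euc n × ℝ × ℝ × Euc n × SymMat n =>
      G q.1 q.2.1 q.2.2.1 q.2.2.2.1 q.2.2.2.2))
    (ha : IntegrableOn a (Set.Ioo 0 T)) (ha₀ : IntegrableOn a₀ (Set.Ioo 0 T))
    (hb : IntegrableOn b (Set.Ioo 0 T)) (hψ : ContDiff ℝ 2 ψ) (hh : ContDiff ℝ 2 h)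
    (hz : ContDiff ℝ 2 z) (hp : p ∈ Ω ×ˢ Set.Ioo 0 T)
    (hmax : IsLocalMaxOn (fun q : Euc n × ℝ => v q.1 q.2 - (ψ q + z q.2 * h q) +
      ∫ s in Set.Ioo 0 q.2, (b s - correctionError C δ a₀ a (deriv z) s)) (Ω ×ˢ Set.Ioo 0 T) p)
    (hC : |H (parabolicJet (fun q => ψ q + z p.2 * h q) p).2.1| < C)
    (hδ : |H (parabolicJet (fun q => ψ q + z p.2 * h q) p).2.1 - h p| < δ) :
    ¬ Violates b G (fun x t r p X => F x t r p X + a₀ t * H p) p (v p.1 p.2)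
      (parabolicJet (fun q => ψ q + z p.2 * h q) p) := by
  intro hviol
  have hderiv : Continuous (deriv z) := hz.continuous_deriv one_le_two
  have hderiv_int := integrableOn_deriv_of_contDiff (T := T) (hz.of_le one_le_two)
  refine (isL1Subsolution_iff.1 hv).2 (fun q => ψ q + z q.2 * h q)
    (hψ.add ((hz.comp contDiff_snd).mul hh)) _
    (hb.sub (integrableOn_correctionError ha ha₀ hderiv_int))
    (fun x t r p X => G x t r p X - deriv z t * h (x, t)) (hG.sub ?_) p hp hmax ?_
  · exact (hderiv.comp continuous_snd.fst).mul (hh.continuous.comp (by fun_prop))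
  · rw [parabolicJet_add_mul (hψ.differentiable two_ne_zero) (hh.differentiable two_ne_zero)
      (hz.differentiable two_ne_zero)]
    exact hviol.correct hH hh.continuous hC hδ

lemma exists_contDiff_correction {K : Set ((Euc n × ℝ) × ℝ)} {N : Set (Euc n × ℝ)} {η : ℝ}
    (hK : IsCompact K) (hN : IsCompact N)
    (hG : Continuous (fun q : Euc n × ℝ × ℝ × Euc n × SymMat n =>
      G q.1 q.2.1 q.2.2.1 q.2.2.2.1 q.2.2.2.2))
    (hH : Continuous H) (hψ : ContDiff ℝ 2 ψ)
    (hviol : ∀ x ∈ K, Violates b G F x.1 x.2 (parabolicJet ψ x.1))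
    (hC : ∀ x ∈ K, |H (parabolicJet ψ x.1).2.1| < C) (hδ : 0 < δ) (hη : 0 < η) :
    ∃ h : Euc n × ℝ → ℝ, ContDiff ℝ 2 h ∧ ∀ᶠ c in 𝓝 (0 : ℝ),
      (∀ x ∈ K, Violates b G F x.1 x.2 (parabolicJet (fun q => ψ q + c * h q) x.1) ∧
        |H (parabolicJet (fun q => ψ q + c * h q) x.1).2.1| < C ∧
        |H (parabolicJet (fun q => ψ q + c * h q) x.1).2.1 - h x.1| < δ) ∧
      ∀ p ∈ N, |c * h p| < η := by
  have hHψ : Continuous fun p => H (parabolicJet ψ p).2.1 :=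
    hH.comp ((continuous_parabolicJet (Φ := fun _ : ℝ => ψ) (hψ.comp contDiff_snd)).comp
      (.prodMk_right 0)).snd.fst
  obtain ⟨h, hh : ContDiff ℝ 2 h, hclose, -⟩ := hHψ.exists_contDiff_approx (2 : ℕ∞)
    continuous_const fun _ => hδ
  have hclose' (p : Euc n × ℝ) : |H (parabolicJet ψ p).2.1 - h p| < δ := by
    rw [← Real.dist_eq, dist_comm]
    exact hclose p
  refine ⟨h, hh, (eventually_forall_violates_add_const_mul hK hG hH hψ hh hviol hC
    fun x _ => hclose' x.1).and (hN.eventually_forall_of_forall_eventually fun p _ => ?_)⟩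
  have hmul : Continuous fun x : ℝ × Euc n × ℝ => |x.1 * h x.2| :=
    (continuous_fst.mul (hh.continuous.comp continuous_snd)).abs
  exact (hmul.tendsto (0, p)).eventually_lt_const (by simpa using hη)

lemma Violates.exists_isCompact_mem_nhds {p₀ : Euc n × ℝ} {r : ℝ} {W : Set (Euc n × ℝ)}
    (hviol : Violates b G F p₀ r (parabolicJet ψ p₀))
    (hG : Continuous (fun q : Euc n × ℝ × ℝ × Euc n × SymMat n =>
      G q.1 q.2.1 q.2.2.1 q.2.2.2.1 q.2.2.2.2))
    (hH : Continuous H) (hψ : ContDiff ℝ 2 ψ) (hW : W ∈ 𝓝 p₀)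
    (hC : |H (parabolicJet ψ p₀).2.1| < C) :
    ∃ K ∈ 𝓝 (p₀, r), IsCompact K ∧ ∀ x ∈ K, x.1 ∈ W ∧
      Violates b G F x.1 x.2 (parabolicJet ψ x.1) ∧ |H (parabolicJet ψ x.1).2.1| < C := by
  have hjet : Continuous fun x : (Euc n × ℝ) × ℝ => parabolicJet ψ x.1 :=
    (continuous_parabolicJet (Φ := fun _ : ℝ => ψ) (hψ.comp contDiff_snd)).comp
      (f := fun x : (Euc n × ℝ) × ℝ => (x.2, x.1)) (by fun_prop)
  have hnear : ∀ᶠ x in 𝓝 (p₀, r), x.1 ∈ W ∧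
      Violates b G F x.1 x.2 (parabolicJet ψ x.1) ∧ |H (parabolicJet ψ x.1).2.1| < C :=
    (continuous_fst.tendsto (p₀, r) |>.eventually hW).and
      (((continuous_id.prodMk hjet).tendsto (p₀, r) |>.eventually (hviol.eventually hG)).and
        (((hH.comp hjet.snd.fst).abs.tendsto (p₀, r)).eventually_lt_const hC))
  obtain ⟨K, hK, hKW, hKc⟩ := local_compact_nhds hnear
  exact ⟨K, hK, hKc, hKW⟩

variable {ι : Type*} {l : Filter ι}

lemma exists_eventually_exists_corrected_test {a : ι → ℝ → ℝ} {K : Set ((Euc n × ℝ) × ℝ)}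
    {N : Set (Euc n × ℝ)} {C₀ η : ℝ} (hK : IsCompact K) (hN : IsCompact N)
    (hG : Continuous (fun q : Euc n × ℝ × ℝ × Euc n × SymMat n =>
      G q.1 q.2.1 q.2.2.1 q.2.2.2.1 q.2.2.2.2))
    (hH : Continuous H) (hψ : ContDiff ℝ 2 ψ) (hb : IntegrableOn b (Set.Ioo 0 T))
    (ha : ∀ᶠ i in l, IntegrableOn (a i) (Set.Ioo 0 T)) (ha₀ : IntegrableOn a₀ (Set.Ioo 0 T))
    (hC₀ : ∀ᶠ i in l, ∫ s in Set.Ioo 0 T, |a i s| ≤ C₀)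
    (hconv : TendstoUniformlyOn (fun i t => ∫ s in Set.Ioo 0 t, a i s)
      (fun t => ∫ s in Set.Ioo 0 t, a₀ s) l (Set.Ioo 0 T))
    (hC : 0 < C) (hη : 0 < η)
    (hviol : ∀ x ∈ K, Violates b G F x.1 x.2 (parabolicJet ψ x.1) ∧
      |H (parabolicJet ψ x.1).2.1| < C) :
    ∃ δ, ∃ h : Euc n × ℝ → ℝ, ContDiff ℝ 2 h ∧ ∀ᶠ i in l, ∃ z : ℝ → ℝ, ContDiff ℝ 2 z ∧
      (∀ x ∈ K, x.1.2 ∈ Set.Ioo 0 T →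
        Violates b G F x.1 x.2 (parabolicJet (fun q => ψ q + z x.1.2 * h q) x.1) ∧
        |H (parabolicJet (fun q => ψ q + z x.1.2 * h q) x.1).2.1| < C ∧
        |H (parabolicJet (fun q => ψ q + z x.1.2 * h q) x.1).2.1 - h x.1| < δ) ∧
      ∀ p ∈ N, p.2 ∈ Set.Ioo 0 T → |(-(ψ p + z p.2 * h p) + ∫ s in Set.Ioo 0 p.2,
        (b s - correctionError C δ a₀ (a i) (deriv z) s)) -
          (-ψ p + ∫ s in Set.Ioo 0 p.2, b s)| ≤ η := by
  obtain ⟨M, hM₀, hM⟩ : ∃ M > 0, C₀ + (∫ s in Set.Ioo 0 T, |a₀ s|) + 1 ≤ M :=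
    ⟨_, lt_max_of_lt_left one_pos, le_max_right 1 _⟩
  have hδ : 0 < η / 3 / M := by positivity
  obtain ⟨h, hh, hsmall⟩ := exists_contDiff_correction hK hN hG hH hψ (fun x hx => (hviol x hx).1)
    (fun x hx => (hviol x hx).2) hδ (show 0 < η / 3 by positivity)
  obtain ⟨κ, hκ, hκsmall⟩ := Metric.eventually_nhds_iff.1 hsmall
  obtain ⟨τ, hτ, hτ₁, hτκ, hτC⟩ : ∃ τ > 0, τ ≤ 1 ∧ τ ≤ κ ∧ C * τ ≤ η / 3 := by
    refine ⟨min (min 1 κ) (η / 3 / C), by positivity, (min_le_left _ _).trans (min_le_left _ _),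
      (min_le_left _ _).trans (min_le_right _ _), ?_⟩
    exact (mul_le_mul_of_nonneg_left (min_le_right _ _) hC.le).trans_eq
      (mul_div_cancel₀ _ hC.ne')
  refine ⟨η / 3 / M, h, hh, ?_⟩
  filter_upwards [ha, eventually_exists_contDiff_integral_abs_sub_sub_deriv_le ha ha₀ hC₀ hconv hτ]
    with i hi ⟨z, hz, hzτ, hzM, hzlt⟩
  have hzM' : ∫ s in Set.Ioo 0 T, |deriv z s| ≤ M := by linarith
  have hz₀ (t : ℝ) (ht : t ∈ Set.Ioo 0 T) := hκsmall (y := z t)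
    (by simpa using (hzlt t ht).trans_le hτκ)
  refine ⟨z, hz, fun x hx ht => (hz₀ _ ht).1 x hx, fun p hp ht => ?_⟩
  have herr := abs_setIntegral_sub_correctionError_sub_le hi ha₀
    (integrableOn_deriv_of_contDiff (hz.of_le one_le_two)) hb hC.le hδ.le
    (Set.Ioo_subset_Ioo_right ht.2.le) hzτ hzM'
  rw [div_mul_cancel₀ _ hM₀.ne'] at herr
  have hzh := abs_lt.1 ((hz₀ _ ht).2 p hp)
  rw [abs_le] at herr ⊢
  constructor <;> linarith

variable [l.NeBot] {u : ι → Euc n → ℝ → ℝ}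

lemma Violates.exists_frequently_forall_exists_isLocalMaxOn {φ : Euc n × ℝ → ℝ} {p₀ : Euc n × ℝ}
    (hviol : Violates b G F p₀
      (relaxedLimsup l (Ω ×ˢ Set.Ioo 0 T) (fun i p => u i p.1 p.2) p₀) (parabolicJet φ p₀))
    (hΩ : IsOpen Ω) (hH : Continuous H)
    (hG : Continuous (fun q : Euc n × ℝ × ℝ × Euc n × SymMat n =>
      G q.1 q.2.1 q.2.2.1 q.2.2.2.1 q.2.2.2.2))
    (hbd : LocallyBoundedAlong l (Ω ×ˢ Set.Ioo 0 T) fun i p => u i p.1 p.2)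
    (husc : ∀ᶠ i in l, UpperSemicontinuousOn (fun p : Euc n × ℝ => u i p.1 p.2)
      (Ω ×ˢ Set.Ioo 0 T))
    (hφ : ContDiff ℝ 2 φ) (hb : IntegrableOn b (Set.Ioo 0 T)) (hp₀ : p₀ ∈ Ω ×ˢ Set.Ioo 0 T)
    (hmax : IsLocalMaxOn (fun q : Euc n × ℝ =>
      relaxedLimsup l (Ω ×ˢ Set.Ioo 0 T) (fun i p => u i p.1 p.2) q - φ q +
        ∫ s in Set.Ioo 0 q.2, b s) (Ω ×ˢ Set.Ioo 0 T) p₀) :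
    ∃ ψ : Euc n × ℝ → ℝ, ContDiff ℝ 2 ψ ∧ ∃ N ⊆ Ω ×ˢ Set.Ioo 0 T, IsCompact N ∧
      ∃ K : Set ((Euc n × ℝ) × ℝ), IsCompact K ∧ ∃ C > 0,
        (∀ x ∈ K, Violates b G F x.1 x.2 (parabolicJet ψ x.1) ∧
          |H (parabolicJet ψ x.1).2.1| < C) ∧
        ∃ η > 0, ∃ᶠ i in l, ∀ f : Euc n × ℝ → ℝ, ContinuousOn f N →
          (∀ p ∈ N, |f p - (-ψ p + ∫ s in Set.Ioo 0 p.2, b s)| ≤ η) →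
          ∃ p ∈ Ω ×ˢ Set.Ioo 0 T, (p, u i p.1 p.2) ∈ K ∧
            IsLocalMaxOn (fun q : Euc n × ℝ => u i q.1 q.2 + f q) (Ω ×ˢ Set.Ioo 0 T) p := by
  have hD : IsOpen (Ω ×ˢ Set.Ioo 0 T) := hΩ.prod isOpen_Ioo
  simp only [sub_add_eq_add_sub] at hmax
  obtain ⟨ψ, hψ, hψviol, N, hN, hNc, hND, hstrict⟩ :=
    hviol.exists_isCompact_strict_max hG hφ (hD.mem_nhds hp₀) hmax
  obtain ⟨K, hK, hKc, hKviol⟩ := hψviol.exists_isCompact_mem_nhds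
    hG hH hψ (interior_mem_nhds.2 hN) (lt_add_one _)
  have hbcont : ContinuousOn (fun q : Euc n × ℝ => ∫ s in Set.Ioo 0 q.2, b s)
      (Ω ×ˢ Set.Ioo 0 T) :=
    (continuousOn_setIntegral_Ioo hb).comp continuousOn_snd fun q hq => hq.2
  obtain ⟨η, hη, hfreq⟩ := hbd.exists_frequently_forall_exists_isMaxOn husc
    (hψ.continuous.neg.continuousOn.add hbcont) hNc hND (mem_nhdsWithin_of_mem_nhds hN) hp₀
    (fun p hp hne => by
      simp only [Pi.add_apply, Pi.neg_apply]
      linarith [hstrict p hp hne]) hK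
  refine ⟨ψ, hψ, N, hND, hNc, K, hKc, _, by positivity, fun x hx => (hKviol x hx).2, η, hη,
    hfreq.mono fun i hi f hf hclose => ?_⟩
  obtain ⟨p, hp, hpmax, hpK⟩ := hi f hf hclose
  exact ⟨p, hND hp, hpK,
    (hpmax.isLocalMax (mem_interior_iff_mem_nhds.1 (hKviol _ hpK).1)).on _⟩

theorem stability_stochastic_pde_subsolution_general {a : ι → ℝ → ℝ} {C₀ : ℝ} (hΩ : IsOpen Ω)
    (hH : Continuous H) (ha : ∀ᶠ i in l, IntegrableOn (a i) (Set.Ioo 0 T))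
    (ha₀ : IntegrableOn a₀ (Set.Ioo 0 T)) (hC₀ : ∀ᶠ i in l, ∫ s in Set.Ioo 0 T, |a i s| ≤ C₀)
    (hconv : TendstoUniformlyOn (fun i t => ∫ s in Set.Ioo 0 t, a i s)
      (fun t => ∫ s in Set.Ioo 0 t, a₀ s) l (Set.Ioo 0 T))
    (hbd : LocallyBoundedAlong l (Ω ×ˢ Set.Ioo 0 T) fun i p => u i p.1 p.2)
    (hsub : ∀ᶠ i in l,
      IsL1Subsolution n T Ω (fun x t r p X => F x t r p X + a i t * H p) (u i)) :
    IsL1Subsolution n T Ω (fun x t r p X => F x t r p X + a₀ t * H p) fun x t =>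
      relaxedLimsup l (Ω ×ˢ Set.Ioo 0 T) (fun i p => u i p.1 p.2) (x, t) := by
  refine isL1Subsolution_iff.2 ⟨hbd.upperSemicontinuousOn_relaxedLimsup,
    fun φ hφ b hb G hG p₀ hp₀ hmax hviol => ?_⟩
  obtain ⟨ψ, hψ, N, hND, hN, K, hK, C, hC, hKviol, η, hη, hfreq⟩ :=
    hviol.exists_frequently_forall_exists_isLocalMaxOn hΩ hH hG hbd (hsub.mono fun i hi => hi.1)
      hφ hb hp₀ hmax
  obtain ⟨δ, h, hh, hcorr⟩ := exists_eventually_exists_corrected_test hK hN hG hH hψ hb ha ha₀ hC₀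
    hconv hC hη hKviol
  obtain ⟨i, hmax_i, hi, hsub_i, z, hz, hzviol, hzclose⟩ :=
    (hfreq.and_eventually (ha.and (hsub.and hcorr))).exists
  have hb' : IntegrableOn (fun s => b s - correctionError C δ a₀ (a i) (deriv z) s)
      (Set.Ioo 0 T) :=
    hb.sub (integrableOn_correctionError hi ha₀
      (integrableOn_deriv_of_contDiff (hz.of_le one_le_two)))
  obtain ⟨p, hp, hpK, hpmax⟩ := hmax_i _
    (((hψ.add ((hz.comp contDiff_snd).mul hh)).continuous.neg.continuousOn).add
      ((continuousOn_setIntegral_Ioo hb').comp continuousOn_snd fun q hq => (hND hq).2))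
    fun q hq => hzclose q hq (hND hq).2
  obtain ⟨hpviol, hpC, hpδ⟩ := hzviol _ hpK hp.2
  refine hsub_i.not_violates_of_isLocalMaxOn hH hG hi ha₀ hb hψ hh hz hp ?_ hpC hpδ hpviol
  convert hpmax using 2 with q
  simp [sub_eq_add_neg, add_assoc]

end Stability

/-! ### Sequences indexed by `ε → 0` -/

lemma LocUnifBounded.locallyBoundedAlong {n : ℕ} {D : Set (Euc n × ℝ)} {u : ℝ → Euc n → ℝ → ℝ}
    (hu : LocUnifBounded n D u) (hD : IsOpen D) :
    LocallyBoundedAlong (𝓝[>] (0 : ℝ)) D fun ε p => u ε p.1 p.2 := by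
  intro p hp
  obtain ⟨K, hK, hpK, hKD⟩ := exists_compact_subset hD hp
  obtain ⟨C, hC⟩ := hu K hKD hK
  have hnear : ∀ᶠ q in 𝓝[D] p, q ∈ K :=
    mem_nhdsWithin_of_mem_nhds (mem_interior_iff_mem_nhds.1 hpK)
  have hpos : ∀ᶠ ε in 𝓝[>] (0 : ℝ), 0 < ε := self_mem_nhdsWithin
  exact ⟨C, (hpos.prod_mk hnear).mono fun q hq => hC q.1 hq.1 q.2 hq.2⟩

lemma setIntegral_Ioo_eq_sub_of_hasDerivWithinAt {f f' : ℝ → ℝ} {T : ℝ}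
    (hf' : ContinuousOn f' (Set.Icc 0 T))
    (hf : ∀ t ∈ Set.Icc 0 T, HasDerivWithinAt f (f' t) (Set.Icc 0 T) t) {t : ℝ}
    (ht : t ∈ Set.Icc 0 T) : ∫ s in Set.Ioo 0 t, f' s = f t - f 0 := by
  have hsub : Set.Icc 0 t ⊆ Set.Icc 0 T := Set.Icc_subset_Icc_right ht.2
  rw [← integral_Ioc_eq_integral_Ioo, ← intervalIntegral.integral_of_le ht.1]
  refine intervalIntegral.integral_eq_sub_of_hasDerivAt_of_le ht.1
    (fun s hs => ((hf s (hsub hs)).continuousWithinAt).mono hsub)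
    (fun s hs => (hf s (hsub (Set.Ioo_subset_Icc_self hs))).hasDerivAt
      (Icc_mem_nhds hs.1 (hs.2.trans_le ht.2))) ?_
  exact ContinuousOn.intervalIntegrable_of_Icc ht.1 (hf'.mono hsub)

lemma tendstoUniformlyOn_setIntegral_Ioo {ι : Type*} {l : Filter ι} {T : ℝ} {f f' : ι → ℝ → ℝ}
    {f₀ f₀' : ℝ → ℝ} (hT : 0 < T)
    (hf : ∀ᶠ i in l, ContinuousOn (f' i) (Set.Icc 0 T) ∧
      ∀ t ∈ Set.Icc 0 T, HasDerivWithinAt (f i) (f' i t) (Set.Icc 0 T) t)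
    (hf₀ : ∀ t ∈ Set.Icc 0 T, f₀ t = f₀ 0 + ∫ s in (0 : ℝ)..t, f₀' s)
    (hconv : TendstoUniformlyOn f f₀ l (Set.Icc 0 T)) :
    TendstoUniformlyOn (fun i t => ∫ s in Set.Ioo 0 t, f' i s)
      (fun t => ∫ s in Set.Ioo 0 t, f₀' s) l (Set.Ioo 0 T) := by
  have hconv₀ : TendstoUniformlyOn (fun i _ => f i 0) (fun _ : ℝ => f₀ 0) l (Set.Ioo 0 T) :=
    (hconv.tendsto_at (Set.left_mem_Icc.2 hT.le)).tendstoUniformlyOn_const _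
  refine (((hconv.mono Set.Ioo_subset_Icc_self).sub hconv₀).congr ?_).congr_right fun t ht => ?_
  · filter_upwards [hf] with i hi t ht
    exact (setIntegral_Ioo_eq_sub_of_hasDerivWithinAt hi.1 hi.2
      (Set.Ioo_subset_Icc_self ht)).symm
  · simp only [Pi.sub_apply]
    rw [hf₀ t (Set.Ioo_subset_Icc_self ht), add_sub_cancel_left,
      intervalIntegral.integral_of_le ht.1.le, integral_Ioc_eq_integral_Ioo]

/-- stability for the approximate stochastic pde
`u^ε_t + F(x,t,u^ε,Du^ε,D²u^ε) + ẇ_ε(t) H(Du^ε) = 0` when `‖ẇ_ε‖_{L¹}` is uniformly bounded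
and `w_ε → w` uniformly, `w` absolutely continuous with `ẇ ∈ L¹(0,T)`:
the half-relaxed upper limit is an L¹-viscosity subsolution of
`u_t + F(x,t,u,Du,D²u) + ẇ(t) H(Du) = 0`. -/
theorem stability_stochastic_pde_subsolution
    (n : ℕ) (T : ℝ) (hT : 0 < T) (Ω : Set (Euc n)) (hΩ : IsOpen Ω)
    (F : Euc n → ℝ → ℝ → Euc n → SymMat n → ℝ)
    -- F is degenerate elliptic, continuous in (x,r,p,X) for a.e. t, L¹ in t,
    -- and satisfies property (M)
    (hell : DegenerateElliptic n T F)
    (hcont : ∀ᵐ t ∂(volume.restrict (Set.Ioo 0 T)),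
      Continuous (fun q : Euc n × ℝ × Euc n × SymMat n => F q.1 t q.2.1 q.2.2.1 q.2.2.2))
    (hint : ∀ x r p X, IntegrableOn (fun t => F x t r p X) (Set.Ioo 0 T))
    (hFM : PropM n T Ω F)
    -- H is locally Lipschitz continuous
    (H : Euc n → ℝ) (hH : LocallyLipschitz H)
    -- the w_ε are C¹ on [0,T] with derivatives ẇ_ε = we' ε ...
    (we : ℝ → ℝ → ℝ) (we' : ℝ → ℝ → ℝ)
    (hC1 : ∀ ε > (0:ℝ), ContinuousOn (we' ε) (Set.Icc 0 T) ∧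
      ∀ t ∈ Set.Icc 0 T, HasDerivWithinAt (we ε) (we' ε t) (Set.Icc 0 T) t)
    -- ... with ‖ẇ_ε‖_{L¹(0,T)} uniformly bounded in ε ...
    (hL1bd : ∃ C : ℝ, ∀ ε > (0:ℝ), ∫ s in Set.Ioo 0 T, |we' ε s| ≤ C)
    -- ... converging uniformly on [0,T] to w ...
    (w : ℝ → ℝ)
    (hconv : TendstoUniformlyOn we w (𝓝[>] (0:ℝ)) (Set.Icc 0 T))
    -- ... where w is absolutely continuous with derivative ẇ = w' ∈ L¹(0,T)
    (w' : ℝ → ℝ) (hw'int : IntegrableOn w' (Set.Ioo 0 T))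
    (hAC : ∀ t ∈ Set.Icc 0 T, w t = w 0 + ∫ s in (0:ℝ)..t, w' s)
    -- (u^ε) locally uniformly bounded L¹-viscosity subsolutions of the approximate equations
    (u : ℝ → Euc n → ℝ → ℝ)
    (hbd : LocUnifBounded n (Ω ×ˢ Set.Ioo 0 T) u)
    (hsub : ∀ ε > (0:ℝ), IsL1Subsolution n T Ω
      (fun x t r p X => F x t r p X + we' ε t * H p) (u ε)) :
    IsL1Subsolution n T Ω (fun x t r p X => F x t r p X + w' t * H p)
      (limsupStar n (Ω ×ˢ Set.Ioo 0 T) u) := by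
  have hpos : ∀ᶠ ε in 𝓝[>] (0 : ℝ), 0 < ε := self_mem_nhdsWithin
  obtain ⟨C, hC⟩ := hL1bd
  have hwe' : ∀ᶠ ε in 𝓝[>] (0 : ℝ), IntegrableOn (we' ε) (Set.Ioo 0 T) :=
    hpos.mono fun ε hε => (hC1 ε hε).1.integrableOn_Icc.mono_set Set.Ioo_subset_Icc_self
  exact stability_stochastic_pde_subsolution_general hΩ hH.continuous hwe' hw'int (hpos.mono hC)
    (tendstoUniformlyOn_setIntegral_Ioo hT (hpos.mono hC1) hAC hconv)
    (hbd.locallyBoundedAlong (hΩ.prod isOpen_Ioo)) (hpos.mono hsub)
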